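/- Let L be a finite-dimensional real Lie algebra whose Killing form is negative definite. Then every element x of L can be written as x = ⁅a, b⁆ where a ∈ L can be chosen to be a regular element of L. -/

import Mathlib

/-!
Minus the Killing form is an `Aut(L)`-invariant inner product on `L`, so `Aut(L)` is compact. Fix a
regular `a`; its centralizer `t` is abelian, and `tᗮ` is the range of `ad a`. Hence it suffices to
move `x` into `tᗮ` by an automorphism. Choose `y` in the orbit of `x` whose projection `p` to `t` is
as short as possible. Along `exp (s • ad z)` the first variation gives `⁅p, y⁆ = 0`, and the second
variation gives `⟪⁅p, z⁆, ⁅y, z⁆⟫ ≤ 0`. Summing over an orthonormal basis of vectors `z` yields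
`‖p‖ ^ 2 = ⟪p, y⟫ = -tr (ad p ∘ ad y) ≤ 0`, so `p = 0`.
-/

open scoped RealInnerProductSpace Topology

section Exponential

variable {𝕜 E : Type*} [RCLike 𝕜] [NormedAddCommGroup E] [NormedSpace 𝕜 E] [CompleteSpace E]

lemma hasDerivAt_exp_smul_apply (D : E →L[𝕜] E) (u : E) (s : 𝕜) :
    HasDerivAt (fun s : 𝕜 => NormedSpace.exp (s • D) u) (D (NormedSpace.exp (s • D) u)) s := by
  simpa using (hasDerivAt_exp_smul_const' (𝕂 := 𝕜) D s).clm_apply (hasDerivAt_const s u)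

lemma exp_apply_of_derivation {B : E →L[𝕜] E →L[𝕜] E} {D : E →L[𝕜] E}
    (hD : ∀ u v, D (B u v) = B (D u) v + B u (D v)) (u v : E) :
    NormedSpace.exp D (B u v) = B (NormedSpace.exp D u) (NormedSpace.exp D v) := by
  let w : 𝕜 → E := fun s => B (NormedSpace.exp (s • D) u) (NormedSpace.exp (s • D) v)
  have hw (s : 𝕜) : HasDerivAt w (D (w s)) s := by
    rw [hD]
    simpa using (B.hasFDerivAt.comp_hasDerivAt s (hasDerivAt_exp_smul_apply D u s)).clm_apply
      (hasDerivAt_exp_smul_apply D v s)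
  have hconst (s : 𝕜) : HasDerivAt (fun s : 𝕜 => NormedSpace.exp (s • -D) (w s)) 0 s := by
    simpa using (hasDerivAt_exp_smul_const (𝕂 := 𝕜) (-D) s).clm_apply (hw s)
  have hpull : NormedSpace.exp (-D) (w 1) = B u v := by
    simpa [w] using is_const_of_deriv_eq_zero (fun s => (hconst s).differentiableAt)
      (fun s => (hconst s).deriv) 1 0
  have hinv : NormedSpace.exp D * NormedSpace.exp (-D) = 1 := by
    let : NormedAlgebra ℚ (E →L[𝕜] E) := .restrictScalars ℚ 𝕜 _
    rw [← NormedSpace.exp_add_of_commute (Commute.neg_right (Commute.refl D)), add_neg_cancel,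
      NormedSpace.exp_zero]
  calc NormedSpace.exp D (B u v)
      = (NormedSpace.exp D * NormedSpace.exp (-D)) (w 1) := by
        rw [← hpull, ContinuousLinearMap.mul_def, ContinuousLinearMap.comp_apply]
    _ = B (NormedSpace.exp D u) (NormedSpace.exp D v) := by simp [hinv, w]

lemma norm_exp_apply_of_mem_skewAdjoint {H : Type*} [NormedAddCommGroup H] [InnerProductSpace 𝕜 H]
    [CompleteSpace H] {D : H →L[𝕜] H} (hD : D ∈ skewAdjoint (H →L[𝕜] H)) (u : H) :
    ‖NormedSpace.exp D u‖ = ‖u‖ := by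
  let : NormedAlgebra ℚ (H →L[𝕜] H) := .restrictScalars ℚ 𝕜 _
  have hunitary : NormedSpace.exp D ∈ unitary (H →L[𝕜] H) :=
    NormedSpace.exp_mem_unitary_of_mem_skewAdjoint hD
  exact ContinuousLinearMap.norm_map_of_mem_unitary hunitary u

end Exponential

section SecondVariation

lemma deriv_deriv_nonneg_of_isLocalMin {f : ℝ → ℝ} {x : ℝ} (hmin : IsLocalMin f x)
    (hf : ContinuousAt f x) : 0 ≤ deriv (deriv f) x := by
  by_contra! hneg
  have hmax : IsLocalMax f x := isLocalMax_of_deriv_deriv_neg hneg hmin.deriv_eq_zero hf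
  have hconst : f =ᶠ[𝓝 x] fun _ => f x := by
    filter_upwards [hmin, hmax] with s h₁ h₂ using le_antisymm h₂ h₁
  simpa using hneg.trans_eq' hconst.deriv.deriv_eq

variable {E F : Type*} [NormedAddCommGroup E] [NormedSpace ℝ E] [CompleteSpace E]
  [NormedAddCommGroup F] [InnerProductSpace ℝ F]

lemma hasDerivAt_norm_sq_apply_exp_smul (A : E →L[ℝ] F) (D : E →L[ℝ] E) (y : E) (s : ℝ) :
    HasDerivAt (fun s : ℝ => ‖A (NormedSpace.exp (s • D) y)‖ ^ 2)
      (2 * ⟪A (NormedSpace.exp (s • D) y), A (D (NormedSpace.exp (s • D) y))⟫) s :=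
  (A.hasFDerivAt.comp_hasDerivAt s (hasDerivAt_exp_smul_apply D y s)).norm_sq

variable {A : E →L[ℝ] F} {D : E →L[ℝ] E} {y : E}

lemma inner_apply_apply_eq_zero_of_isLocalMin_norm_sq
    (hmin : IsLocalMin (fun s : ℝ => ‖A (NormedSpace.exp (s • D) y)‖ ^ 2) 0) :
    ⟪A y, A (D y)⟫ = 0 := by
  simpa using hmin.hasDerivAt_eq_zero (hasDerivAt_norm_sq_apply_exp_smul A D y 0)

lemma inner_add_norm_sq_nonneg_of_isLocalMin_norm_sq
    (hmin : IsLocalMin (fun s : ℝ => ‖A (NormedSpace.exp (s • D) y)‖ ^ 2) 0) :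
    0 ≤ ⟪A y, A (D (D y))⟫ + ‖A (D y)‖ ^ 2 := by
  let w : ℝ → E := fun s => NormedSpace.exp (s • D) y
  have hw (T : E →L[ℝ] F) : HasDerivAt (fun s => T (w s)) (T (D (w 0))) 0 :=
    T.hasFDerivAt.comp_hasDerivAt 0 (hasDerivAt_exp_smul_apply D y 0)
  have hderiv : deriv (fun s => ‖A (w s)‖ ^ 2) = fun s => 2 * ⟪A (w s), A (D (w s))⟫ :=
    funext fun s => (hasDerivAt_norm_sq_apply_exp_smul A D y s).deriv
  have hderiv₂ : HasDerivAt (fun s => 2 * ⟪A (w s), A (D (w s))⟫)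
      (2 * (⟪A (w 0), A (D (D (w 0)))⟫ + ⟪A (D (w 0)), A (D (w 0))⟫)) 0 :=
    ((hw A).inner ℝ (hw (A ∘L D))).const_mul 2
  have hnonneg := deriv_deriv_nonneg_of_isLocalMin hmin
    (hasDerivAt_norm_sq_apply_exp_smul A D y 0).continuousAt
  rw [hderiv, hderiv₂.deriv, real_inner_self_eq_norm_sq] at hnonneg
  simpa [w] using hnonneg

end SecondVariation

lemma inner_starProjection_starProjection {𝕜 H : Type*} [RCLike 𝕜] [NormedAddCommGroup H]
    [InnerProductSpace 𝕜 H] (t : Submodule 𝕜 H) [t.HasOrthogonalProjection] (u v : H) :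
    inner 𝕜 (t.starProjection u) (t.starProjection v) = inner 𝕜 (t.starProjection u) v := by
  rw [← t.inner_starProjection_left_eq_right,
    Submodule.starProjection_eq_self_iff.2 (t.starProjection_apply_mem u)]

section RegularElements

open LieAlgebra

lemma isRegular_lieEquiv_apply_iff {R L : Type*} [CommRing R] [LieRing L] [LieAlgebra R L]
    [Module.Finite R L] [Module.Free R L] (e : L ≃ₗ⁅R⁆ L) {a : L} :
    IsRegular R (e a) ↔ IsRegular R a := by
  rw [isRegular_def, isRegular_def, ← conj_ad_apply, LinearEquiv.charpoly_conj]

variable {K L : Type*} [Field K] [Infinite K] [LieRing L] [LieAlgebra K L] [FiniteDimensional K L]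

lemma engel_le_engel_of_isRegular {a h : L} (ha : IsRegular K a)
    (hh : h ∈ LieSubalgebra.engel K a) : LieSubalgebra.engel K a ≤ LieSubalgebra.engel K h := by
  let H : {LieSubalgebra.engel K y | y ∈ LieSubalgebra.engel K a} :=
    ⟨LieSubalgebra.engel K a, a, LieSubalgebra.self_mem_engel K a, rfl⟩
  have hmin : IsMin H := by
    rintro ⟨_, y, -, rfl⟩ (hya : LieSubalgebra.engel K y ≤ LieSubalgebra.engel K a)
    have hrank : Module.finrank K (LieSubalgebra.engel K a) ≤
        Module.finrank K (LieSubalgebra.engel K y) :=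
      ((isRegular_iff_finrank_engel_eq_rank K a).1 ha).trans_le (rank_le_finrank_engel K y)
    exact (Submodule.eq_of_le_of_finrank_le hya hrank).ge
  have hcard : (Module.finrank K L : Cardinal) ≤ Cardinal.mk K :=
    Cardinal.natCast_le_aleph0.trans (Cardinal.aleph0_le_mk K)
  exact engel_isBot_of_isMin hcard _ H le_rfl hmin ⟨LieSubalgebra.engel K h, h, hh, rfl⟩

lemma isCartanSubalgebra_engel_of_isRegular {a : L} (ha : IsRegular K a) :
    (LieSubalgebra.engel K a).IsCartanSubalgebra where
  nilpotent := LieSubalgebra.isNilpotent_of_forall_le_engel _ fun _ =>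
    engel_le_engel_of_isRegular ha
  self_normalizing := LieSubalgebra.normalizer_engel K a

lemma lie_eq_zero_of_isRegular [IsKilling K L] {a h k : L} (ha : IsRegular K a)
    (hh : ⁅a, h⁆ = 0) (hk : ⁅a, k⁆ = 0) : ⁅h, k⁆ = 0 := by
  have := isCartanSubalgebra_engel_of_isRegular ha
  have mem_engel {u : L} (hu : ⁅a, u⁆ = 0) : u ∈ LieSubalgebra.engel K a :=
    (LieSubalgebra.mem_engel_iff K a u).2 ⟨1, by simpa using hu⟩
  exact congrArg Subtype.val (trivial_lie_zero (LieSubalgebra.engel K a)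
    (LieSubalgebra.engel K a) ⟨h, mem_engel hh⟩ ⟨k, mem_engel hk⟩)

end RegularElements

/-- The finite-dimensional members of this class are the Lie algebras of compact semisimple Lie
groups. Bundling the negativity of the Killing form as a class lets minus the Killing form serve as
the inner product found by instance search. -/
class IsCompactSemisimple (L : Type*) [LieRing L] [LieAlgebra ℝ L] : Prop where
  killingForm_neg : ∀ x : L, x ≠ 0 → killingForm ℝ L x x < 0

namespace IsCompactSemisimple

variable {L : Type*} [LieRing L] [LieAlgebra ℝ L] [IsCompactSemisimple L]

instance : LieAlgebra.IsKilling ℝ L where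
  killingCompl_top_eq_bot := by
    refine (LieSubmodule.eq_bot_iff _).2 fun x hx => ?_
    by_contra hne
    exact (killingForm_neg x hne).ne ((LieIdeal.mem_killingCompl ℝ L ⊤).1 hx x trivial)

variable (L) in
/-- Minus the Killing form, as an inner product. -/
@[reducible]
noncomputable def innerCore : InnerProductSpace.Core ℝ L where
  inner x y := -killingForm ℝ L x y
  conj_inner_symm x y := by rw [conj_trivial, LieModule.traceForm_comm]
  re_inner_nonneg x := by
    obtain rfl | hx := eq_or_ne x 0
    · simp
    · simpa using (killingForm_neg x hx).le
  add_left x y z := by simp [add_comm]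
  smul_left x y r := by simp
  definite x hx := by
    by_contra hne
    exact (killingForm_neg x hne).ne (neg_eq_zero.1 hx)

noncomputable local instance : NormedAddCommGroup L := (innerCore L).toNormedAddCommGroup

noncomputable local instance : InnerProductSpace ℝ L := .ofCore (innerCore L).toCore

lemma inner_eq_neg_killingForm (x y : L) : ⟪x, y⟫ = -killingForm ℝ L x y := rfl

lemma inner_lie_left (x y z : L) : ⟪⁅x, y⁆, z⟫ = -⟪y, ⁅x, z⁆⟫ :=
  congrArg Neg.neg (LieModule.traceForm_apply_lie_apply' ℝ L L x y z)

lemma norm_lieEquiv_apply (e : L ≃ₗ⁅ℝ⁆ L) (u : L) : ‖e u‖ = ‖u‖ := by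
  rw [norm_eq_sqrt_real_inner, norm_eq_sqrt_real_inner, inner_eq_neg_killingForm,
    LieAlgebra.killingForm_of_equiv_apply, inner_eq_neg_killingForm]

variable [FiniteDimensional ℝ L]

local instance : CompleteSpace L := FiniteDimensional.complete ℝ L

variable (L) in
/-- The adjoint representation `z ↦ ad z` with values in continuous operators, to which the operator
exponential and adjoint apply. -/
noncomputable def adL : L →L[ℝ] L →L[ℝ] L :=
  (LieAlgebra.ad ℝ L : L →ₗ[ℝ] Module.End ℝ L).toContinuousBilinearMap

@[simp]
lemma adL_apply_apply (z u : L) : adL L z u = ⁅z, u⁆ := rfl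

lemma adL_mem_skewAdjoint (z : L) : adL L z ∈ skewAdjoint (L →L[ℝ] L) := by
  rw [skewAdjoint.mem_iff, ContinuousLinearMap.star_eq_adjoint, eq_comm,
    ContinuousLinearMap.eq_adjoint_iff]
  intro u v
  rw [neg_apply, inner_neg_left, adL_apply_apply, adL_apply_apply, inner_lie_left, neg_neg]

lemma exists_lieEquiv_coe_eq_iff {g : L →L[ℝ] L} :
    (∃ e : L ≃ₗ⁅ℝ⁆ L, ⇑e = g) ↔ (∀ u v, g ⁅u, v⁆ = ⁅g u, g v⁆) ∧ ∀ u, ‖g u‖ = ‖u‖ := by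
  constructor
  · rintro ⟨e, he⟩
    simp only [← he, LieEquiv.map_lie, norm_lieEquiv_apply, implies_true, and_self]
  · rintro ⟨hlie, hnorm⟩
    have hinj : Function.Injective g := (AddMonoidHomClass.isometry_of_norm g hnorm).injective
    let f : L →ₗ⁅ℝ⁆ L := { (g : L →ₗ[ℝ] L) with map_lie' := hlie _ _ }
    have hsurj : Function.Surjective g :=
      LinearMap.surjective_of_injective (f := (g : L →ₗ[ℝ] L)) hinj
    exact ⟨.ofBijective f ⟨hinj, hsurj⟩, rfl⟩

lemma exists_lieEquiv_coe_eq_exp_adL (z : L) :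
    ∃ e : L ≃ₗ⁅ℝ⁆ L, ⇑e = NormedSpace.exp (adL L z) :=
  exists_lieEquiv_coe_eq_iff.2
    ⟨exp_apply_of_derivation (B := adL L) (leibniz_lie z),
      norm_exp_apply_of_mem_skewAdjoint (adL_mem_skewAdjoint z)⟩

lemma isCompact_setOf_exists_lieEquiv_coe_eq :
    IsCompact {g : L →L[ℝ] L | ∃ e : L ≃ₗ⁅ℝ⁆ L, ⇑e = g} := by
  have : ProperSpace (L →L[ℝ] L) := FiniteDimensional.proper ℝ _
  simp only [exists_lieEquiv_coe_eq_iff]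
  refine Metric.isCompact_of_isClosed_isBounded ?_
    (isBounded_iff_forall_norm_le.2 ⟨1, fun g hg => ?_⟩)
  · have hlie (u v : L) : IsClosed {g : L →L[ℝ] L | g ⁅u, v⁆ = ⁅g u, g v⁆} :=
      isClosed_eq (by fun_prop) (by simp only [← adL_apply_apply]; fun_prop)
    have hnorm (u : L) : IsClosed {g : L →L[ℝ] L | ‖g u‖ = ‖u‖} :=
      isClosed_eq (by fun_prop) continuous_const
    simp only [Set.ofPred_and, Set.ofPred_forall]
    exact (isClosed_iInter fun u => isClosed_iInter (hlie u)).inter (isClosed_iInter hnorm)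
  · exact g.opNorm_le_bound zero_le_one fun u => by rw [hg.2, one_mul]

lemma isCompact_range_lieEquiv_apply (x : L) : IsCompact (Set.range fun e : L ≃ₗ⁅ℝ⁆ L => e x) := by
  convert isCompact_setOf_exists_lieEquiv_coe_eq.image
    (f := fun g : L →L[ℝ] L => g x) (by fun_prop) using 1
  ext y
  constructor
  · rintro ⟨e, rfl⟩
    exact ⟨(e : L →ₗ[ℝ] L).toContinuousLinearMap, ⟨e, rfl⟩, rfl⟩
  · rintro ⟨g, ⟨e, he⟩, rfl⟩
    exact ⟨e, congrFun he x⟩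

/-- The projection of `y` to `t` is at least as short as that of any other point of the orbit of `y`
under the automorphism group. -/
def IsProjMinimal (t : Submodule ℝ L) (y : L) : Prop :=
  ∀ e : L ≃ₗ⁅ℝ⁆ L, ‖t.starProjection y‖ ≤ ‖t.starProjection (e y)‖

lemma exists_isProjMinimal_lieEquiv_apply (t : Submodule ℝ L) (x : L) :
    ∃ e : L ≃ₗ⁅ℝ⁆ L, IsProjMinimal t (e x) := by
  obtain ⟨_, ⟨e, rfl⟩, hmin⟩ := (isCompact_range_lieEquiv_apply x).exists_isMinOn
    (Set.range_nonempty _) (f := fun y => ‖t.starProjection y‖) (by fun_prop)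
  exact ⟨e, fun e' => hmin ⟨e.trans e', rfl⟩⟩

lemma inner_nonpos_of_forall_inner_lie_lie_nonpos {p y : L}
    (h : ∀ z : L, ⟪⁅p, z⁆, ⁅y, z⁆⟫ ≤ 0) : ⟪p, y⟫ ≤ 0 := by
  let b := stdOrthonormalBasis ℝ L
  calc ⟪p, y⟫ = -∑ i, ⟪b i, ⁅p, ⁅y, b i⁆⁆⟫ := by
        rw [inner_eq_neg_killingForm, killingForm_apply_apply, LinearMap.trace_eq_sum_inner _ b]
        rfl
    _ = ∑ i, ⟪⁅p, b i⁆, ⁅y, b i⁆⟫ := by simp only [inner_lie_left, Finset.sum_neg_distrib]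
    _ ≤ 0 := Finset.sum_nonpos fun i _ => h (b i)

variable {t : Submodule ℝ L} {y : L}

namespace IsProjMinimal

lemma isLocalMin_norm_sq (hy : IsProjMinimal t y) (z : L) :
    IsLocalMin (fun s : ℝ => ‖t.starProjection (NormedSpace.exp (s • adL L z) y)‖ ^ 2) 0 := by
  refine .of_forall fun s => ?_
  obtain ⟨e, he⟩ := exists_lieEquiv_coe_eq_exp_adL (s • z)
  simpa [he] using pow_le_pow_left₀ (norm_nonneg _) (hy e) 2

lemma inner_starProjection_lie_eq_zero (hy : IsProjMinimal t y) (z : L) :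
    ⟪t.starProjection y, ⁅z, y⁆⟫ = 0 := by
  simpa only [inner_starProjection_starProjection, adL_apply_apply] using
    inner_apply_apply_eq_zero_of_isLocalMin_norm_sq (hy.isLocalMin_norm_sq z)

lemma inner_starProjection_lie_lie_add_norm_sq_nonneg (hy : IsProjMinimal t y) (z : L) :
    0 ≤ ⟪t.starProjection y, ⁅z, ⁅z, y⁆⁆⟫ + ‖t.starProjection ⁅z, y⁆‖ ^ 2 := by
  simpa only [inner_starProjection_starProjection, adL_apply_apply] using
    inner_add_norm_sq_nonneg_of_isLocalMin_norm_sq (hy.isLocalMin_norm_sq z)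

lemma lie_starProjection_eq_zero (hy : IsProjMinimal t y) : ⁅t.starProjection y, y⁆ = 0 := by
  refine ext_inner_right ℝ fun z => ?_
  calc ⟪⁅t.starProjection y, y⁆, z⟫ = ⟪⁅z, t.starProjection y⁆, y⟫ := by
        rw [inner_lie_left, ← lie_skew, inner_neg_right, neg_neg, real_inner_comm]
    _ = -⟪t.starProjection y, ⁅z, y⁆⟫ := inner_lie_left z _ y
    _ = ⟪0, z⟫ := by rw [hy.inner_starProjection_lie_eq_zero, neg_zero, inner_zero_left]

lemma lie_mem_orthogonal (hy : IsProjMinimal t y) (ht : ∀ h ∈ t, ∀ k ∈ t, ⁅h, k⁆ = 0) {z : L}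
    (hz : z ∈ (adL L (t.starProjection y)).kerᗮ) : ⁅z, y⁆ ∈ tᗮ := by
  refine (t.mem_orthogonal' _).2 fun k hk => ?_
  have hyk : ⁅y, k⁆ ∈ (adL L (t.starProjection y)).ker := by
    rw [LinearMap.mem_ker, ContinuousLinearMap.coe_coe, adL_apply_apply, leibniz_lie,
      hy.lie_starProjection_eq_zero, ht _ (t.starProjection_apply_mem y) k hk, zero_lie, lie_zero,
      add_zero]
  rw [← lie_skew, inner_neg_left, inner_lie_left, neg_neg]
  exact Submodule.inner_left_of_mem_orthogonal hyk hz

lemma inner_lie_lie_nonpos_of_mem_orthogonal (hy : IsProjMinimal t y)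
    (ht : ∀ h ∈ t, ∀ k ∈ t, ⁅h, k⁆ = 0) {z : L} (hz : z ∈ (adL L (t.starProjection y)).kerᗮ) :
    ⟪⁅t.starProjection y, z⁆, ⁅y, z⁆⟫ ≤ 0 := by
  have hproj : t.starProjection ⁅z, y⁆ = 0 :=
    t.starProjection_apply_eq_zero_iff.2 (hy.lie_mem_orthogonal ht hz)
  calc ⟪⁅t.starProjection y, z⁆, ⁅y, z⁆⟫ = ⟪⁅z, t.starProjection y⁆, ⁅z, y⁆⟫ := by
        rw [← lie_skew z y, ← lie_skew z (t.starProjection y), inner_neg_neg]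
    _ = -(⟪t.starProjection y, ⁅z, ⁅z, y⁆⁆⟫ + ‖t.starProjection ⁅z, y⁆‖ ^ 2) := by
        rw [inner_lie_left, hproj, norm_zero, zero_pow two_ne_zero, add_zero]
    _ ≤ 0 := neg_nonpos.2 (hy.inner_starProjection_lie_lie_add_norm_sq_nonneg z)

lemma inner_lie_lie_nonpos (hy : IsProjMinimal t y) (ht : ∀ h ∈ t, ∀ k ∈ t, ⁅h, k⁆ = 0) (z : L) :
    ⟪⁅t.starProjection y, z⁆, ⁅y, z⁆⟫ ≤ 0 := by
  obtain ⟨k, hk, w, hw, rfl⟩ :=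
    (adL L (t.starProjection y)).ker.exists_add_mem_mem_orthogonal z
  replace hk : ⁅t.starProjection y, k⁆ = 0 := hk
  have hcross : ⟪⁅t.starProjection y, w⁆, ⁅y, k⁆⟫ = 0 := by
    rw [inner_lie_left, leibniz_lie, hy.lie_starProjection_eq_zero, hk, zero_lie, lie_zero,
      add_zero, inner_zero_right, neg_zero]
  calc ⟪⁅t.starProjection y, k + w⁆, ⁅y, k + w⁆⟫ = ⟪⁅t.starProjection y, w⁆, ⁅y, w⁆⟫ := by
        rw [lie_add, lie_add, hk, zero_add, inner_add_right, hcross, zero_add]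
    _ ≤ 0 := hy.inner_lie_lie_nonpos_of_mem_orthogonal ht hw

lemma mem_orthogonal (hy : IsProjMinimal t y) (ht : ∀ h ∈ t, ∀ k ∈ t, ⁅h, k⁆ = 0) : y ∈ tᗮ := by
  have hnorm : ⟪t.starProjection y, y⟫ = ‖t.starProjection y‖ ^ 2 :=
    t.re_inner_starProjection_eq_normSq y
  have hnonpos : ‖t.starProjection y‖ ^ 2 ≤ 0 :=
    hnorm ▸ inner_nonpos_of_forall_inner_lie_lie_nonpos (hy.inner_lie_lie_nonpos ht)
  rw [← t.starProjection_apply_eq_zero_iff, ← norm_eq_zero, ← sq_nonpos_iff]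
  exact hnonpos

end IsProjMinimal

lemma exists_lieEquiv_apply_mem_orthogonal (ht : ∀ h ∈ t, ∀ k ∈ t, ⁅h, k⁆ = 0) (x : L) :
    ∃ e : L ≃ₗ⁅ℝ⁆ L, e x ∈ tᗮ :=
  (exists_isProjMinimal_lieEquiv_apply t x).imp fun _ he => he.mem_orthogonal ht

lemma orthogonal_ker_adL (a : L) : (adL L a).kerᗮ = (adL L a).range := by
  have hadj : (adL L a).adjoint = -adL L a := skewAdjoint.mem_iff.1 (adL_mem_skewAdjoint a)
  rw [ContinuousLinearMap.orthogonal_ker, hadj,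
    (Submodule.closed_of_finiteDimensional _).submodule_topologicalClosure_eq]
  exact LinearMap.range_neg _

lemma exists_lieEquiv_apply_eq_lie {a : L} (ha : LieAlgebra.IsRegular ℝ a) (x : L) :
    ∃ (e : L ≃ₗ⁅ℝ⁆ L) (b : L), e x = ⁅a, b⁆ := by
  obtain ⟨e, he⟩ := exists_lieEquiv_apply_mem_orthogonal (t := (adL L a).ker)
    (fun _ hh _ hk => lie_eq_zero_of_isRegular ha hh hk) x
  rw [orthogonal_ker_adL] at he
  obtain ⟨b, hb⟩ := he
  exact ⟨e, b, hb.symm⟩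

end IsCompactSemisimple

/-- Every element of a compact semisimple real Lie algebra is a commutator `⁅a, b⁆`
where `a` may be chosen regular. -/
theorem commutator_with_regular (L : Type*) [LieRing L] [LieAlgebra ℝ L] [FiniteDimensional ℝ L]
    (hneg : ∀ x : L, x ≠ 0 → killingForm ℝ L x x < 0) :
    ∀ x : L, ∃ a b : L, LieAlgebra.IsRegular ℝ a ∧ x = ⁅a, b⁆ := by
  intro x
  have : IsCompactSemisimple L := ⟨hneg⟩
  obtain ⟨a, ha⟩ := LieAlgebra.exists_isRegular ℝ L
  obtain ⟨e, b, hb⟩ := IsCompactSemisimple.exists_lieEquiv_apply_eq_lie ha x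
  refine ⟨e.symm a, e.symm b, (isRegular_lieEquiv_apply_iff e.symm).2 ha, ?_⟩
  rw [← LieEquiv.map_lie, ← hb, LieEquiv.symm_apply_apply]
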